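/- The function q_s has a left-hand limit at every point of (0,∞): for every x₀ > 0 there exists L ∈ ℝ such that q_s(x) tends to L as x tends to x₀ from the left (within (0,x₀)). -/

import Mathlib

/-!
The function `x ↦ x q_s(x)` is nondecreasing on `(0,∞)` (`mul_qs_mono`); a monotone bounded
function has one-sided limits, and dividing by `x` gives the left-hand limit of `q_s`.

Monotonicity comes from moving the base while keeping the digits fixed. A sequence `d` is a unique
expansion in base `q` iff after each digit `0` the tail, and after each digit `1` the reflected
tail, has value `< 1` (`Crit`, `mem_univSet`). Values decrease when the base increases, so the
criterion persists in larger bases (`crit_mono`). More precisely, `val q d ≤ (p/q) val p d` for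
`p ≤ q` (`val_scale`). So if `d` is the unique expansion of `x` in base `p`, and `0 < y ≤ x` with
`p x / y ≤ 2`, the intermediate value theorem provides a base `q ∈ [p, p x / y]` in which `d` is
the unique expansion of `y` (`exists_mem_univSet`). Hence `q_s(y) ≤ p x / y`, which also holds
trivially when the right side exceeds `2`; take the infimum over `p ∈ 𝒰(x)`.

Since `sInf ∅ = 0`, it has to be proved that `𝒰(x)` is nonempty for `x > 0`. For `x ≥ 1` the
sequence `1^∞` in base `1 + 1/x` works. For `x < 1`, base `2` works unless `x` is dyadic, and then
one replaces the end `0 1^∞` of the binary expansion of `x` by `0 (1^N 0)^∞` and lowers the base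
slightly (`univSet_nonempty_of_dyadic`).
-/

open Filter Set

noncomputable section

/-- `d` is a `q`-expansion of `x`: all digits lie in `{0,1}` and
`x = ∑_{i=1}^∞ d_i q^{-i}`.  Here `d i` stands for the digit `d_{i+1}`. -/
def IsExpansion (q x : ℝ) (d : ℕ → ℕ) : Prop :=
  (∀ i, d i ≤ 1) ∧ x = ∑' i : ℕ, (d i : ℝ) / q ^ (i + 1)

/-- `𝒰(x)`: the set of bases `q ∈ (1,2]` in which `x` has a unique expansion. -/
def UnivSet (x : ℝ) : Set ℝ :=
  {q | q ∈ Set.Ioc (1 : ℝ) 2 ∧ ∃! d : ℕ → ℕ, IsExpansion q x d}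

/-- `q_s(x) = inf 𝒰(x)`. -/
def qs (x : ℝ) : ℝ := sInf (UnivSet x)

/-- The level set `L(q) = {x > 0 : q_s(x) = q}`. -/
def levelSet (q : ℝ) : Set ℝ := {x | 0 < x ∧ qs x = q}

/-- The golden ratio `q_G = (1+√5)/2`. -/
def qG : ℝ := (1 + Real.sqrt 5) / 2

/-- The Thue–Morse sequence: `tm i = s_i mod 2`, where `s_i` is the number of
`1`s in the binary representation of `i`. -/
def tm (i : ℕ) : ℕ := (Nat.digits 2 i).sum % 2

/-- The set `S ⊆ ℕ`: `2, 3, 4 ∈ S`, and for `k ≥ 2` and `2^k < n ≤ 2^{k+1}`,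
`n ∈ S` iff `n > 3·2^{k-1}` and `n - 3·2^{k-1} ∈ S`; no other elements. -/
inductive memS : ℕ → Prop
  | two : memS 2
  | three : memS 3
  | four : memS 4
  | step (k n : ℕ) (hk : 2 ≤ k) (h1 : 2 ^ k < n) (h2 : n ≤ 2 ^ (k + 1))
      (h3 : 3 * 2 ^ (k - 1) < n) (h : memS (n - 3 * 2 ^ (k - 1))) : memS n

/-! ### Values of digit sequences -/

/-- The value `∑_{i ≥ 0} d_i q^{-(i+1)}` of a digit sequence in base `q`. -/
def val (q : ℝ) (d : ℕ → ℕ) : ℝ := ∑' i : ℕ, (d i : ℝ) / q ^ (i + 1)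

/-- The tail `d_n d_{n+1} …` of a digit sequence. -/
def tail (n : ℕ) (d : ℕ → ℕ) : ℕ → ℕ := fun i => d (i + n)

/-- The sequence with every digit `0` and `1` exchanged. -/
def reflect (d : ℕ → ℕ) : ℕ → ℕ := fun i => 1 - d i

/-- Numerical form of the lexicographic criterion for unique expansions: after a digit `0` the
tail has value `< 1`, and after a digit `1` the reflected tail has value `< 1`. -/
def Crit (q : ℝ) (d : ℕ → ℕ) : Prop :=
  ∀ n, (d n = 0 → val q (tail (n + 1) d) < 1) ∧ (d n = 1 → val q (reflect (tail (n + 1) d)) < 1)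

lemma tail_le {d : ℕ → ℕ} (hd : ∀ i, d i ≤ 1) (n i : ℕ) : tail n d i ≤ 1 := hd _

lemma reflect_le (d : ℕ → ℕ) (i : ℕ) : reflect d i ≤ 1 := Nat.sub_le _ _

lemma reflect_reflect {d : ℕ → ℕ} (hd : ∀ i, d i ≤ 1) : reflect (reflect d) = d := by
  funext i
  have := hd i
  simp only [reflect]
  omega

lemma hasSum_one {q : ℝ} (hq : 1 < q) : HasSum (fun i : ℕ => 1 / q ^ (i + 1)) (1 / (q - 1)) := by
  have h := (hasSum_geometric_of_lt_one (r := 1 / q) (by positivity)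
    (by rw [div_lt_one (by linarith)]; exact hq)).mul_left (1 / q)
  have e : 1 / q * (1 - 1 / q)⁻¹ = 1 / (q - 1) := by
    have : q - 1 ≠ 0 := by linarith
    have : q ≠ 0 := by linarith
    field_simp
  rw [e] at h
  refine h.congr_fun ?_
  intro i
  simp [pow_succ, mul_comm]

lemma term_nonneg {q : ℝ} (hq : 1 < q) (d : ℕ → ℕ) (i : ℕ) : 0 ≤ (d i : ℝ) / q ^ (i + 1) := by
  have : 0 < q := by linarith
  positivity

lemma term_le {q : ℝ} (hq : 1 < q) {d : ℕ → ℕ} (hd : ∀ i, d i ≤ 1) (i : ℕ) :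
    (d i : ℝ) / q ^ (i + 1) ≤ 1 / q ^ (i + 1) := by
  have : 0 < q := by linarith
  have : (d i : ℝ) ≤ 1 := by exact_mod_cast hd i
  gcongr

lemma summable_val {q : ℝ} (hq : 1 < q) {d : ℕ → ℕ} (hd : ∀ i, d i ≤ 1) :
    Summable (fun i : ℕ => (d i : ℝ) / q ^ (i + 1)) :=
  Summable.of_nonneg_of_le (term_nonneg hq d) (term_le hq hd) (hasSum_one hq).summable

lemma val_nonneg {q : ℝ} (hq : 1 < q) (d : ℕ → ℕ) : 0 ≤ val q d :=
  tsum_nonneg (term_nonneg hq d)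

lemma val_reflect {q : ℝ} (hq : 1 < q) {d : ℕ → ℕ} (hd : ∀ i, d i ≤ 1) :
    val q (reflect d) = 1 / (q - 1) - val q d := by
  have h := (hasSum_one hq).sub (summable_val hq hd).hasSum
  refine (HasSum.tsum_eq ?_ : val q (reflect d) = _)
  refine h.congr_fun fun i => ?_
  simp only [reflect, Nat.cast_sub (hd i), Nat.cast_one, sub_div]

lemma val_le {q : ℝ} (hq : 1 < q) {d : ℕ → ℕ} (hd : ∀ i, d i ≤ 1) :
    val q d ≤ 1 / (q - 1) := by
  have := val_reflect hq hd
  have := val_nonneg hq (reflect d)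
  linarith

/-- The value of a sequence with a digit `1` at position `j` is at least `q^{-(j+1)}`. -/
lemma le_val {q : ℝ} (hq : 1 < q) {d : ℕ → ℕ} (hd : ∀ i, d i ≤ 1) {j : ℕ} (hj : d j = 1) :
    1 / q ^ (j + 1) ≤ val q d := by
  have := (summable_val hq hd).le_tsum j (fun i _ => term_nonneg hq d i)
  simpa [hj, val] using this

lemma val_split {q : ℝ} (hq : 1 < q) {d : ℕ → ℕ} (hd : ∀ i, d i ≤ 1) (n : ℕ) :
    val q d = ∑ i ∈ Finset.range n, (d i : ℝ) / q ^ (i + 1) + val q (tail n d) / q ^ n := by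
  rw [val, ← (summable_val hq hd).sum_add_tsum_nat_add n, val, ← tsum_div_const]
  congr 2
  funext i
  rw [tail, div_div, ← pow_add]
  ring_nf

/-- The value splits at position `n` into the prefix, the digit at `n`, and the tail after it. -/
lemma val_split_succ {q : ℝ} (hq : 1 < q) {d : ℕ → ℕ} (hd : ∀ i, d i ≤ 1) (n : ℕ) :
    val q d = ∑ i ∈ Finset.range n, (d i : ℝ) / q ^ (i + 1)
      + (d n + val q (tail (n + 1) d)) / q ^ (n + 1) := by
  rw [val_split hq hd (n + 1), Finset.sum_range_succ]
  ring

/-! ### The criterion for unique expansions -/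

/-- Every `x ∈ [0, 1/(q-1)]` has an expansion in base `q ∈ (1,2]`, by the greedy algorithm. -/
lemma exists_expansion {q x : ℝ} (hq : 1 < q) (hq2 : q ≤ 2) (h0 : 0 ≤ x) (h1 : x ≤ 1 / (q - 1)) :
    ∃ d : ℕ → ℕ, (∀ i, d i ≤ 1) ∧ val q d = x := by
  -- `r n` is the remainder of the greedy algorithm after `n` digits
  let r : ℕ → ℝ := fun n => Nat.rec x (fun _ y => if 1 ≤ q * y then q * y - 1 else q * y) n
  let d : ℕ → ℕ := fun n => if 1 ≤ q * r n then 1 else 0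
  have hd : ∀ i, d i ≤ 1 := by
    intro i
    simp only [d]
    split_ifs <;> simp
  have hr : ∀ n, r (n + 1) = q * r n - d n := by
    intro n
    change (if 1 ≤ q * r n then q * r n - 1 else q * r n) = _
    simp only [d]
    split_ifs <;> simp
  have hq1 : 0 < q - 1 := by linarith
  have hB : 1 ≤ 1 / (q - 1) := by rw [le_div_iff₀ hq1]; linarith
  have hBe : q * (1 / (q - 1)) = 1 / (q - 1) + 1 := by field_simp; ring
  have hbd : ∀ n, 0 ≤ r n ∧ r n ≤ 1 / (q - 1) := by
    intro n
    induction n with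
    | zero => exact ⟨h0, h1⟩
    | succ n ih =>
      rw [hr]
      simp only [d]
      have := mul_le_mul_of_nonneg_left ih.2 (by linarith : 0 ≤ q)
      have := mul_nonneg (by linarith : 0 ≤ q) ih.1
      split_ifs with h
      · push_cast; constructor <;> linarith
      · push_cast; constructor <;> linarith
  have hsum : ∀ n, ∑ i ∈ Finset.range n, (d i : ℝ) / q ^ (i + 1) = x - r n / q ^ n := by
    intro n
    induction n with
    | zero => simp [r]
    | succ n ih =>
      have : q ≠ 0 := by linarith
      rw [Finset.sum_range_succ, ih, hr]
      field_simp
      ring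
  refine ⟨d, hd, ?_⟩
  have hlim : Tendsto (fun n => x - r n / q ^ n) atTop (nhds (x - 0)) := by
    refine Tendsto.sub tendsto_const_nhds ?_
    have h2 : Tendsto (fun n : ℕ => 1 / (q - 1) / q ^ n) atTop (nhds 0) :=
      tendsto_const_nhds.div_atTop (tendsto_pow_atTop_atTop_of_one_lt hq)
    refine squeeze_zero (fun n => ?_) (fun n => ?_) h2
    · exact div_nonneg (hbd n).1 (by positivity)
    · have := (hbd n).2
      gcongr
  have h3 := (summable_val hq hd).hasSum.tendsto_sum_nat
  simp only [hsum] at h3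
  have := tendsto_nhds_unique h3 hlim
  simpa [val] using this

/-- Half of the necessity of `Crit`: if a digit `0` is followed by a tail of value `≥ 1`, that
digit can be raised to `1`, the surplus being re-expanded. -/
lemma tail_lt_one_of_unique {q : ℝ} (hq : 1 < q) (hq2 : q ≤ 2) {d : ℕ → ℕ} (hd : ∀ i, d i ≤ 1)
    (hu : ∀ e : ℕ → ℕ, (∀ i, e i ≤ 1) → val q e = val q d → e = d) {n : ℕ} (hn : d n = 0) :
    val q (tail (n + 1) d) < 1 := by
  by_contra! h
  obtain ⟨e, he, hev⟩ := exists_expansion hq hq2 (x := val q (tail (n + 1) d) - 1) (by linarith)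
    (by linarith [val_le hq (tail_le hd (n + 1))])
  let f : ℕ → ℕ := fun i => if i < n then d i else if i = n then 1 else e (i - (n + 1))
  have hf : ∀ i, f i ≤ 1 := by
    intro i
    simp only [f]
    split_ifs
    exacts [hd _, le_rfl, he _]
  have hft : tail (n + 1) f = e := by
    funext i
    simp only [tail, f]
    rw [if_neg (by omega), if_neg (by omega), Nat.add_sub_cancel]
  have hfn : f n = 1 := by simp [f]
  have hv : val q f = val q d := by
    rw [val_split_succ hq hf n, val_split_succ hq hd n, hft, hev, hfn, hn]
    congr 1
    · refine Finset.sum_congr rfl fun i hi => ?_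
      simp [f, Finset.mem_range.1 hi]
    · push_cast; ring
  have := congrFun (hu f hf hv) n
  omega

lemma crit_of_unique {q : ℝ} (hq : 1 < q) (hq2 : q ≤ 2) {d : ℕ → ℕ} (hd : ∀ i, d i ≤ 1)
    (hu : ∀ e : ℕ → ℕ, (∀ i, e i ≤ 1) → val q e = val q d → e = d) : Crit q d := by
  refine fun n => ⟨tail_lt_one_of_unique hq hq2 hd hu, fun hn => ?_⟩
  refine tail_lt_one_of_unique (d := reflect d) hq hq2 (reflect_le d) (fun e he hv => ?_) (n := n)
    (by simp [reflect, hn])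
  rw [val_reflect hq hd] at hv
  have h := hu (reflect e) (reflect_le e) (by rw [val_reflect hq he, hv]; ring)
  rw [← h, reflect_reflect he]

lemma unique_of_crit {q : ℝ} (hq : 1 < q) {d : ℕ → ℕ} (hd : ∀ i, d i ≤ 1)
    (hc : Crit q d) {e : ℕ → ℕ} (he : ∀ i, e i ≤ 1) (hv : val q e = val q d) : e = d := by
  by_contra hne
  have hex : ∃ n, e n ≠ d n := by
    by_contra! h
    exact hne (funext h)
  classical
  -- compare both sequences at the first position where they differ
  obtain ⟨n, hn, hmin⟩ : ∃ n, e n ≠ d n ∧ ∀ m < n, e m = d m :=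
    ⟨Nat.find hex, Nat.find_spec hex, fun m hm => not_not.1 (Nat.find_min hex hm)⟩
  rw [val_split_succ hq he n, val_split_succ hq hd n,
    Finset.sum_congr rfl (fun i hi => by rw [hmin i (Finset.mem_range.1 hi)])] at hv
  have hpos : 0 < q ^ (n + 1) := by positivity
  have hv' : (e n : ℝ) + val q (tail (n + 1) e) = d n + val q (tail (n + 1) d) := by
    have := add_left_cancel hv
    field_simp at this
    exact this
  have h0 := val_nonneg hq (tail (n + 1) e)
  have h1 := val_le hq (tail_le he (n + 1))
  have h2 := val_reflect hq (tail_le hd (n + 1))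
  have hdn := hd n
  have hen := he n
  rcases Nat.le_one_iff_eq_zero_or_eq_one.1 hdn with hd0 | hd1
  · have he1 : e n = 1 := by omega
    have := (hc n).1 hd0
    rw [hd0, he1] at hv'
    push_cast at hv'
    linarith
  · have he0 : e n = 0 := by omega
    have := (hc n).2 hd1
    rw [hd1, he0] at hv'
    push_cast at hv'
    linarith

/-- `q ∈ 𝒰(x)` in terms of `Crit`. -/
lemma mem_univSet {q x : ℝ} :
    q ∈ UnivSet x ↔ (1 < q ∧ q ≤ 2) ∧ ∃ d : ℕ → ℕ, (∀ i, d i ≤ 1) ∧ val q d = x ∧ Crit q d := by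
  constructor
  · rintro ⟨⟨hq, hq2⟩, d, ⟨hd, hx⟩, hu⟩
    exact ⟨⟨hq, hq2⟩, d, hd, hx.symm,
      crit_of_unique hq hq2 hd fun e he hv => hu e ⟨he, hx.trans hv.symm⟩⟩
  · rintro ⟨⟨hq, hq2⟩, d, hd, hx, hc⟩
    exact ⟨⟨hq, hq2⟩, d, ⟨hd, hx.symm⟩,
      fun e he => unique_of_crit hq hd hc he.1 (he.2.symm.trans hx.symm)⟩

/-! ### Dependence on the base -/

/-- Raising the base scales the value down by at least the ratio of the bases. -/
lemma val_scale {p q : ℝ} (hp : 1 < p) (hpq : p ≤ q) {d : ℕ → ℕ} (hd : ∀ i, d i ≤ 1) :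
    val q d ≤ p / q * val p d := by
  have hq : 1 < q := by linarith
  rw [val, val, ← tsum_mul_left]
  refine (summable_val hq hd).tsum_le_tsum (fun i => ?_) ((summable_val hp hd).mul_left _)
  have h : p ^ i ≤ q ^ i := by gcongr
  have : p / q * ((d i : ℝ) / p ^ (i + 1)) = d i / (q * p ^ i) := by
    field_simp
    ring
  rw [this, pow_succ']
  gcongr

lemma val_anti {p q : ℝ} (hp : 1 < p) (hpq : p ≤ q) {d : ℕ → ℕ} (hd : ∀ i, d i ≤ 1) :
    val q d ≤ val p d := by
  refine (val_scale hp hpq hd).trans (mul_le_of_le_one_left (val_nonneg hp d) ?_)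
  exact div_le_one_of_le₀ hpq (by linarith)

lemma crit_mono {p q : ℝ} (hp : 1 < p) (hpq : p ≤ q) {d : ℕ → ℕ} (hd : ∀ i, d i ≤ 1)
    (hc : Crit p d) : Crit q d := fun n =>
  ⟨fun h => (val_anti hp hpq (tail_le hd _)).trans_lt ((hc n).1 h),
    fun h => (val_anti hp hpq (reflect_le _)).trans_lt ((hc n).2 h)⟩

lemma continuousOn_val {p : ℝ} (hp : 1 < p) {d : ℕ → ℕ} (hd : ∀ i, d i ≤ 1) (r : ℝ) :
    ContinuousOn (fun q => val q d) (Icc p r) := by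
  refine continuousOn_tsum (u := fun i : ℕ => 1 / p ^ (i + 1)) (fun i => ?_)
    (hasSum_one hp).summable (fun i q hq => ?_)
  · refine continuousOn_const.div (by fun_prop) (fun q hq => ?_)
    have : 0 < q := by linarith [hq.1]
    positivity
  · have hq1 : 1 < q := lt_of_lt_of_le hp hq.1
    rw [Real.norm_of_nonneg (term_nonneg hq1 d i)]
    refine (term_le hq1 hd i).trans ?_
    have := hq.1
    gcongr

/-- Moving the base of a unique expansion of `x` upwards sweeps out the points below `x`. -/
lemma exists_mem_univSet {p x y : ℝ} (hy : 0 < y) (hyx : y ≤ x) (hp : p ∈ UnivSet x)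
    (h2 : p * x / y ≤ 2) : ∃ q ∈ UnivSet y, q ≤ p * x / y := by
  obtain ⟨⟨hp1, hp2⟩, d, hd, hx, hc⟩ := mem_univSet.1 hp
  have hpr : p ≤ p * x / y := by
    rw [le_div_iff₀ hy]
    exact mul_le_mul_of_nonneg_left hyx (by linarith)
  have hlow : val (p * x / y) d ≤ y := by
    refine (val_scale hp1 hpr hd).trans_eq ?_
    have : x ≠ 0 := by linarith
    have : p ≠ 0 := by linarith
    rw [hx]
    field_simp
  obtain ⟨q, hq, hqy⟩ := intermediate_value_Icc' hpr (continuousOn_val hp1 hd _)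
    ⟨hlow, by rw [hx]; exact hyx⟩
  exact ⟨q, mem_univSet.2 ⟨⟨by linarith [hq.1], hq.2.trans h2⟩, d, hd, hqy,
    crit_mono hp1 hq.1 hd hc⟩, hq.2⟩

/-! ### Existence of bases with a unique expansion -/

lemma univSet_nonempty_of_one_le {x : ℝ} (hx : 1 ≤ x) : (UnivSet x).Nonempty := by
  have hx0 : 0 < x := by linarith
  have hi : 1 / x ≤ 1 := by rw [div_le_one hx0]; exact hx
  have hq : 1 < 1 + 1 / x := by
    have : 0 < 1 / x := by positivity
    linarith
  refine ⟨1 + 1 / x, mem_univSet.2 ⟨⟨hq, by linarith⟩, fun _ => 1, fun _ => le_rfl, ?_, ?_⟩⟩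
  · have := (hasSum_one hq).tsum_eq
    simpa [val] using this
  · intro n
    simp [val, reflect, tail]

/-- A sequence having a digit `0` among its first `n + 2` digits has value `< 1` in every base
sufficiently close to `2`. -/
lemma val_lt_one_of_zero {n : ℕ} {q : ℝ} (hq : 2 - 1 / 2 ^ (n + 4) ≤ q) (hq2 : q ≤ 2)
    {d : ℕ → ℕ} (hd : ∀ i, d i ≤ 1) {j : ℕ} (hj : j ≤ n + 1) (h0 : d j = 0) : val q d < 1 := by
  have hpow : (1 : ℝ) / 2 ^ (n + 4) = 1 / 2 ^ (n + 2) / 4 := by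
    rw [pow_add, pow_add]
    field_simp
    norm_num
  have hpos : (0 : ℝ) < 1 / 2 ^ (n + 2) := by positivity
  have hle : (1 : ℝ) / 2 ^ (n + 2) ≤ 1 := by
    rw [div_le_one (by positivity)]; exact one_le_pow₀ (by norm_num)
  have hq1 : 1 < q := by linarith
  have h1 := le_val hq1 (reflect_le d) (j := j) (by simp [reflect, h0])
  rw [val_reflect hq1 hd] at h1
  have h2 : (1 : ℝ) / 2 ^ (n + 2) ≤ 1 / q ^ (j + 1) := by
    have : q ^ (j + 1) ≤ 2 ^ (n + 2) :=
      (pow_le_pow_left₀ (by linarith) hq2 _).trans (pow_le_pow_right₀ (by norm_num) (by omega))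
    gcongr
  have h3 : 1 / (q - 1) < 1 + 1 / 2 ^ (n + 2) := by
    rw [div_lt_iff₀ (by linarith)]
    nlinarith
  linarith

/-- If `x` is `∑_{i<n} w_i 2^{-(i+1)} + 2^{-(n+1)}`, then `w 0 (1^N 0)^∞` is its unique expansion
in some base below `2`, for `N` large. -/
lemma univSet_nonempty_of_dyadic {x : ℝ} {w : ℕ → ℕ} (hw : ∀ i, w i ≤ 1) {n : ℕ}
    (hx : x = ∑ i ∈ Finset.range n, (w i : ℝ) / 2 ^ (i + 1) + 1 / 2 ^ (n + 1)) :
    (UnivSet x).Nonempty := by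
  obtain ⟨p, hp⟩ : ∃ p : ℝ, p = 2 - 1 / 2 ^ (n + 4) := ⟨_, rfl⟩
  have hp2 : p < 2 := by
    have : (0 : ℝ) < 1 / 2 ^ (n + 4) := by positivity
    linarith
  have hp1 : 1 < p := by
    have : (1 : ℝ) / 2 ^ (n + 4) < 1 := by
      rw [div_lt_one (by positivity)]; exact one_lt_pow₀ (by norm_num) (by omega)
    linarith
  -- `N` is chosen so large that `1^N` already has value `> 1` in base `p`
  obtain ⟨N, hN⟩ : ∃ N : ℕ, 1 < ∑ i ∈ Finset.range N, 1 / p ^ (i + 1) := by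
    have h1 : 1 < 1 / (p - 1) := by rw [lt_div_iff₀ (by linarith)]; linarith
    exact ((hasSum_one hp1).tendsto_sum_nat.eventually_const_lt h1).exists
  have hN0 : N ≠ 0 := by
    rintro rfl
    norm_num at hN
  let e : ℕ → ℕ := fun i => if (i + 1) % (N + 1) = 0 then 0 else 1
  have he : ∀ i, e i ≤ 1 := by
    intro i
    simp only [e]
    split_ifs <;> simp
  have he0 : e 0 = 1 := by
    simp only [e]
    rw [if_neg]
    rw [Nat.mod_eq_of_lt (by omega)]
    simp
  have heper : ∀ k, e k = 0 → tail (k + 1) e = e := by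
    intro k hk
    have hk' : (k + 1) % (N + 1) = 0 := by
      by_contra h
      simp [e, h] at hk
    funext i
    simp only [tail, e]
    rw [show i + (k + 1) + 1 = (i + 1) + (k + 1) by ring, Nat.add_mod, hk', add_zero, Nat.mod_mod]
  have hep : 1 < val p e := by
    rw [val_split hp1 he N]
    have h0 := val_nonneg hp1 (tail N e)
    have : ∑ i ∈ Finset.range N, (e i : ℝ) / p ^ (i + 1)
        = ∑ i ∈ Finset.range N, 1 / p ^ (i + 1) := by
      refine Finset.sum_congr rfl fun i hi => ?_
      have hi := Finset.mem_range.1 hi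
      have : e i = 1 := by
        simp only [e]
        rw [if_neg]
        rw [Nat.mod_eq_of_lt (by omega)]
        simp
      simp [this]
    rw [this]
    have : 0 ≤ val p (tail N e) / p ^ N := by positivity
    linarith
  have he2 : val 2 e < 1 := by
    have h1 := le_val one_lt_two (reflect_le e) (j := N) (by simp [reflect, e])
    rw [val_reflect one_lt_two he] at h1
    have : (0 : ℝ) < 1 / 2 ^ (N + 1) := by positivity
    linarith
  let d : ℕ → ℕ := fun i => if i < n then w i else if i = n then 0 else e (i - (n + 1))
  have hd : ∀ i, d i ≤ 1 := by
    intro i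
    simp only [d]
    split_ifs
    exacts [hw _, by simp, he _]
  have hdn : d n = 0 := by simp [d]
  have hde : ∀ i, d (i + (n + 1)) = e i := by
    intro i
    simp only [d]
    rw [if_neg (by omega), if_neg (by omega), Nat.add_sub_cancel]
  have hdt : tail (n + 1) d = e := funext hde
  have hval : ∀ q : ℝ, 1 < q → val q d =
      ∑ i ∈ Finset.range n, (w i : ℝ) / q ^ (i + 1) + val q e / q ^ (n + 1) := by
    intro q hq
    rw [val_split_succ hq hd n, hdt, hdn]
    congr 1
    · refine Finset.sum_congr rfl fun i hi => ?_
      simp [d, Finset.mem_range.1 hi]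
    · simp
  -- a base `q ≤ 2` in which the tail `e` has value `≥ 1` gives `d` a value `≥ x`
  have hbig : ∀ q : ℝ, 1 < q → q ≤ 2 → 1 ≤ val q e → x ≤ val q d := by
    intro q hq hq2 h
    rw [hval q hq, hx]
    gcongr
  have h2 : val 2 d < x := by
    rw [hval 2 one_lt_two, hx]
    gcongr
  obtain ⟨q, hq, hqx⟩ := intermediate_value_Icc' hp2.le (continuousOn_val hp1 hd 2)
    ⟨h2.le, hbig p hp1 hp2.le hep.le⟩
  have hq1 : 1 < q := lt_of_lt_of_le hp1 hq.1
  have hq2 : q < 2 := by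
    refine lt_of_le_of_ne hq.2 ?_
    rintro rfl
    exact h2.ne hqx
  have hqe : val q e < 1 := by
    by_contra! h
    have hlt : (1 : ℝ) / 2 ^ (n + 1) < 1 / q ^ (n + 1) := by
      have : q ^ (n + 1) < 2 ^ (n + 1) := pow_lt_pow_left₀ hq2 (by linarith) (by omega)
      gcongr
    have : x < val q d := by
      rw [hval q hq1, hx]
      refine add_lt_add_of_le_of_lt ?_ (hlt.trans_le ?_)
      · gcongr
      · gcongr
    exact this.ne hqx.symm
  refine ⟨q, mem_univSet.2 ⟨⟨hq1, hq2.le⟩, d, hd, hqx, fun k => ⟨fun hk => ?_, fun hk => ?_⟩⟩⟩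
  · rcases lt_trichotomy k n with h | h | h
    · refine val_lt_one_of_zero (n := n) (hp ▸ hq.1) hq.2 (tail_le hd _) (j := n - (k + 1))
        (by omega) ?_
      rw [tail, Nat.sub_add_cancel (by omega), hdn]
    · rw [h, hdt]
      exact hqe
    · obtain ⟨m, rfl⟩ : ∃ m, k = m + (n + 1) := ⟨k - (n + 1), by omega⟩
      rw [hde] at hk
      have : tail (m + (n + 1) + 1) d = e := by
        rw [← heper m hk]
        funext i
        rw [tail, tail, ← hde]
        congr 1
        ring
      rw [this]
      exact hqe
  · -- the tail has a digit `1` soon: at the start of `(1^N 0)^∞`, or among two of its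
    -- consecutive digits
    obtain ⟨j, hj, hj1⟩ : ∃ j ≤ n + 1, d (j + (k + 1)) = 1 := by
      rcases lt_trichotomy k n with h | h | h
      · refine ⟨n - k, by omega, ?_⟩
        rw [show n - k + (k + 1) = 0 + (n + 1) by omega, hde, he0]
      · rw [h, hdn] at hk
        omega
      · by_cases hz : e (k - n) = 0
        · refine ⟨1, by omega, ?_⟩
          rw [show 1 + (k + 1) = (k - n + 1) + (n + 1) by omega, hde]
          have := congrFun (heper _ hz) 0
          rw [tail, he0, zero_add] at this
          exact this
        · refine ⟨0, by omega, ?_⟩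
          rw [show 0 + (k + 1) = (k - n) + (n + 1) by omega, hde]
          have := he (k - n)
          omega
    refine val_lt_one_of_zero (n := n) (hp ▸ hq.1) hq.2 (reflect_le _) hj ?_
    simp [reflect, tail, hj1]

lemma univSet_nonempty {x : ℝ} (hx : 0 < x) : (UnivSet x).Nonempty := by
  rcases le_or_gt 1 x with h | h
  · exact univSet_nonempty_of_one_le h
  obtain ⟨d, hd, hv⟩ := exists_expansion one_lt_two le_rfl hx.le (by norm_num; exact h.le)
  by_cases hc : Crit 2 d
  · exact ⟨2, mem_univSet.2 ⟨⟨one_lt_two, le_rfl⟩, d, hd, hv, hc⟩⟩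
  simp only [Crit, not_forall] at hc
  obtain ⟨n, hn⟩ := hc
  refine univSet_nonempty_of_dyadic hd (n := n) ?_
  rw [← hv, val_split_succ one_lt_two hd n]
  -- in base `2` the criterion only fails if the tail is `1^∞` after a `0`, or `0^∞` after a `1`
  have h0 := val_nonneg one_lt_two (tail (n + 1) d)
  have h1 := val_le one_lt_two (tail_le hd (n + 1))
  have h2 := val_reflect one_lt_two (tail_le hd (n + 1))
  have key : (d n : ℝ) + val 2 (tail (n + 1) d) = 1 := by
    norm_num at h1 h2
    rw [not_and_or] at hn
    push Not at hn
    rcases hn with ⟨hn, h⟩ | ⟨hn, h⟩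
    · rw [hn]; push_cast; linarith
    · rw [hn]; push_cast; linarith
  rw [key]

/-! ### Monotonicity of `x q_s(x)` and left-hand limits -/

lemma bddBelow_univSet (x : ℝ) : BddBelow (UnivSet x) := ⟨1, fun _ hq => hq.1.1.le⟩

lemma qs_le_two {x : ℝ} (hx : 0 < x) : qs x ≤ 2 := by
  obtain ⟨q, hq⟩ := univSet_nonempty hx
  exact (csInf_le (bddBelow_univSet x) hq).trans hq.1.2

/-- The key monotonicity: `x ↦ x q_s(x)` is nondecreasing. -/
lemma mul_qs_mono : MonotoneOn (fun x => x * qs x) (Ioi 0) := by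
  intro y hy x hx hyx
  have hy : 0 < y := hy
  have hx : 0 < x := hx
  change y * qs y ≤ x * qs x
  rw [mul_comm x, ← div_le_iff₀ hx]
  refine le_csInf (univSet_nonempty hx) fun p hp => ?_
  rw [div_le_iff₀ hx, mul_comm y, ← le_div_iff₀ hy]
  rcases le_total (p * x / y) 2 with h | h
  · obtain ⟨q, hq, hqp⟩ := exists_mem_univSet hy hyx hp h
    exact (csInf_le (bddBelow_univSet y) hq).trans hqp
  · exact (qs_le_two hy).trans h

/-- `q_s` has a left-hand limit at every point of `(0,∞)`. -/
theorem qs_leftLimit_exists (x₀ : ℝ) (hx₀ : 0 < x₀) :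
    ∃ L : ℝ, Filter.Tendsto qs (nhdsWithin x₀ (Set.Ioo 0 x₀)) (nhds L) := by
  have hmono : MonotoneOn (fun x => x * qs x) (Ioo 0 x₀) :=
    mul_qs_mono.mono fun x hx => hx.1
  have hb : BddAbove ((fun x => x * qs x) '' Ioo 0 x₀) := by
    refine ⟨x₀ * qs x₀, ?_⟩
    rintro _ ⟨x, hx, rfl⟩
    exact mul_qs_mono hx.1 hx₀ hx.2.le
  have h := hmono.tendsto_nhdsWithin_Ioo_left (nonempty_Ioo.2 hx₀) hb
  rw [← nhdsWithin_Ioo_eq_nhdsLT hx₀] at h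
  have hid : Tendsto (fun x : ℝ => x) (nhdsWithin x₀ (Ioo 0 x₀)) (nhds x₀) :=
    tendsto_id.mono_left nhdsWithin_le_nhds
  refine ⟨_, (h.div hid hx₀.ne').congr' ?_⟩
  filter_upwards [self_mem_nhdsWithin] with x hx
  exact mul_div_cancel_left₀ _ hx.1.ne'
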